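/- arXiv:1311.4143 — 2 statements merged into one kernel-verified Lean document; each statement's English description precedes it below -/
import Mathlib

section
/- Let H̃ be a numerical semigroup containing an odd number, and let n be the smallest odd element of H̃. Then g(H̃) ≤ 2·g(d₂(H̃)) + (n−1)/2; equivalently, there exists a non-negative integer r with g(H̃) = 2·g(d₂(H̃)) + (n−1)/2 − r. -/
/-!
Write `d⁻¹H` for `{k | d * k ∈ H}` and let `n ∈ H`. If `k ∈ d⁻¹H`, then `n + d * k ∈ H`. So a gap
`x ≡ n [MOD d]` with `n ≤ x` is `n + d * k` for a gap `k` of `d⁻¹H`, and the other gaps in this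
residue class are among its `n / d` members below `n`. For `d = 2`, the elements `0` and an odd `n`
of `H` represent both residue classes, and each class costs one copy of the gaps of `d2 H`.
-/

/-- The genus of a submonoid of ℕ: the cardinality of its complement in ℕ. -/
noncomputable def genus (H : AddSubmonoid ℕ) : ℕ :=
  ((H : Set ℕ)ᶜ).ncard

/-- `d₂ H = {k : ℕ | 2 * k ∈ H}`, i.e. the set of halves of the even elements of `H`,
equivalently the preimage of `H` under multiplication by 2; it is an additive
submonoid of ℕ by construction. -/
def d2 (H : AddSubmonoid ℕ) : AddSubmonoid ℕ where
  carrier := {k : ℕ | 2 * k ∈ H}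
  zero_mem' := by simpa using H.zero_mem
  add_mem' := by
    intro a b ha hb
    simpa [mul_add] using H.add_mem ha hb

/-- Doubling of a submonoid of ℕ: `{2 * h : h ∈ H}`. -/
def twice (H : AddSubmonoid ℕ) : AddSubmonoid ℕ :=
  AddSubmonoid.map (AddMonoidHom.mulLeft 2) H

/-- The sum of two submonoids of ℕ: `{a + b : a ∈ A, b ∈ B}`. -/
def sumSubmonoid (A B : AddSubmonoid ℕ) : AddSubmonoid ℕ where
  carrier := {x : ℕ | ∃ a ∈ A, ∃ b ∈ B, x = a + b}
  zero_mem' := ⟨0, A.zero_mem, 0, B.zero_mem, by simp⟩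
  add_mem' := by
    rintro x y ⟨a, ha, b, hb, rfl⟩ ⟨c, hc, d, hd, rfl⟩
    exact ⟨a + c, A.add_mem ha hc, b + d, B.add_mem hb hd, by ring⟩

theorem coe_genus {H : AddSubmonoid ℕ} (hH : ((H : Set ℕ)ᶜ).Finite) :
    (genus H : ℕ∞) = ((H : Set ℕ)ᶜ).encard :=
  hH.cast_ncard_eq

theorem compl_d2 (H : AddSubmonoid ℕ) : (d2 H : Set ℕ)ᶜ = (2 * ·) ⁻¹' (H : Set ℕ)ᶜ :=
  rfl

theorem finite_compl_d2 {H : AddSubmonoid ℕ} (hH : ((H : Set ℕ)ᶜ).Finite) :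
    ((d2 H : Set ℕ)ᶜ).Finite := by
  rw [compl_d2]
  exact hH.preimage (mul_right_injective₀ two_ne_zero).injOn

theorem compl_inter_modEq_subset {H : AddSubmonoid ℕ} {n : ℕ} (hn : n ∈ H) (d : ℕ) :
    (H : Set ℕ)ᶜ ∩ {x | x ≡ n [MOD d]} ⊆
      (n + d * ·) '' ((d * ·) ⁻¹' (H : Set ℕ)ᶜ) ∪ (n % d + d * ·) '' Set.Iio (n / d) := by
  rintro x ⟨hxH, hxn : x ≡ n [MOD d]⟩
  rcases le_or_gt n x with hle | hlt
  · left
    obtain ⟨k, rfl⟩ := (Nat.modEq_iff_exists_eq_add hle).1 hxn.symm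
    exact ⟨k, fun hk ↦ hxH (H.add_mem hn hk), rfl⟩
  · right
    have hx : n % d + d * (x / d) = x := hxn ▸ Nat.mod_add_div x d
    have hdiv : x / d < n / d := by
      by_contra! hdiv
      refine hlt.not_ge ?_
      calc n = n % d + d * (n / d) := (Nat.mod_add_div n d).symm
        _ ≤ n % d + d * (x / d) := by gcongr
        _ = x := hx
    exact ⟨x / d, hdiv, hx⟩

theorem encard_compl_inter_modEq_le {H : AddSubmonoid ℕ} {n : ℕ} (hn : n ∈ H) (d : ℕ) :
    ((H : Set ℕ)ᶜ ∩ {x | x ≡ n [MOD d]}).encard ≤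
      ((d * ·) ⁻¹' (H : Set ℕ)ᶜ).encard + (n / d : ℕ) := by
  have hIio : (Set.Iio (n / d)).encard = (n / d : ℕ) := by
    simp [← Finset.coe_Iio]
  calc ((H : Set ℕ)ᶜ ∩ {x | x ≡ n [MOD d]}).encard
    _ ≤ ((n + d * ·) '' ((d * ·) ⁻¹' (H : Set ℕ)ᶜ)).encard +
          ((n % d + d * ·) '' Set.Iio (n / d)).encard :=
        (Set.encard_le_encard (compl_inter_modEq_subset hn d)).trans (Set.encard_union_le _ _)
    _ ≤ ((d * ·) ⁻¹' (H : Set ℕ)ᶜ).encard + (Set.Iio (n / d)).encard :=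
        add_le_add (Set.encard_image_le _ _) (Set.encard_image_le _ _)
    _ = ((d * ·) ⁻¹' (H : Set ℕ)ᶜ).encard + (n / d : ℕ) := by rw [hIio]

theorem genus_le_of_smallest_odd_general {H : AddSubmonoid ℕ} {n : ℕ} (hn : n ∈ H)
    (hodd : Odd n) :
    ((H : Set ℕ)ᶜ).encard ≤ 2 * ((d2 H : Set ℕ)ᶜ).encard + ((n - 1) / 2 : ℕ) := by
  let evenGaps := (H : Set ℕ)ᶜ ∩ {x | x ≡ 0 [MOD 2]}
  let oddGaps := (H : Set ℕ)ᶜ ∩ {x | x ≡ n [MOD 2]}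
  have hcover : (H : Set ℕ)ᶜ ⊆ evenGaps ∪ oddGaps := by
    intro x hx
    rcases Nat.mod_two_eq_zero_or_one x with hx2 | hx2
    · exact Or.inl ⟨hx, hx2⟩
    · exact Or.inr ⟨hx, hx2.trans (Nat.odd_iff.1 hodd).symm⟩
  have heven_le : evenGaps.encard ≤ ((d2 H : Set ℕ)ᶜ).encard := by
    simpa [compl_d2] using encard_compl_inter_modEq_le H.zero_mem 2
  have hodd_le : oddGaps.encard ≤ ((d2 H : Set ℕ)ᶜ).encard + ((n - 1) / 2 : ℕ) := by
    have hhalf : n / 2 = (n - 1) / 2 := by grind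
    simpa only [compl_d2, hhalf] using encard_compl_inter_modEq_le hn 2
  calc ((H : Set ℕ)ᶜ).encard
    _ ≤ evenGaps.encard + oddGaps.encard :=
        (Set.encard_le_encard hcover).trans (Set.encard_union_le _ _)
    _ ≤ ((d2 H : Set ℕ)ᶜ).encard + (((d2 H : Set ℕ)ᶜ).encard + ((n - 1) / 2 : ℕ)) :=
        add_le_add heven_le hodd_le
    _ = 2 * ((d2 H : Set ℕ)ᶜ).encard + ((n - 1) / 2 : ℕ) := by ring

/-- Let `H̃` be a numerical semigroup containing an odd number and let `n` be its
smallest odd element. Then `g(H̃) ≤ 2 g(d₂(H̃)) + (n-1)/2`; equivalently there is a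
non-negative integer `r` with `g(H̃) = 2 g(d₂(H̃)) + (n-1)/2 - r`. -/
theorem genus_le_of_smallest_odd (H : AddSubmonoid ℕ) (hH : ((H : Set ℕ)ᶜ).Finite)
    (n : ℕ) (hn : IsLeast {m : ℕ | m ∈ H ∧ Odd m} n) :
    genus H ≤ 2 * genus (d2 H) + (n - 1) / 2 ∧
      ∃ r : ℕ, genus H + r = 2 * genus (d2 H) + (n - 1) / 2 := by
  have hle := genus_le_of_smallest_odd_general hn.1.1 hn.1.2
  rw [← coe_genus hH, ← coe_genus (finite_compl_d2 hH)] at hle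
  norm_cast at hle
  exact ⟨hle, Nat.le.dest hle⟩
end

section
/- Let H̃ be a numerical semigroup of genus g̃ with d₂(H̃) = ⟨2,3⟩. Then H̃ is one of the following: ⟨3,4,5⟩, or ⟨3,4⟩, or ⟨4,5,6,7⟩, or ⟨4,6,2g̃−3⟩ with g̃ ≥ 4, or ⟨4,6,2g̃−1,2g̃+1⟩ with g̃ ≥ 4. -/
/-!
Split `H` by parity into `d2 H = {k | 2 * k ∈ H}` and `oddPart H = {k | 2 * k + 1 ∈ H}`. The latter
is stable under adding elements of `d2 H`, and `genus H` counts the gaps of both parts. If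
`d2 H = ⟨2, 3⟩ = ℕ \ {1}` and `m` is the least element of `oddPart H`, then `oddPart H` consists of
`m`, all numbers from `m + 2` on, and possibly `m + 1`. So `H` is generated by `4`, `6`, `2m + 1`
and, if it belongs to `H`, `2m + 3`; the genus is then `m + 2` or `m + 1`, according to whether
`m + 1` is missing or present. Finally `m ≠ 0`, since `1 ∈ H` would give `2 ∈ H`.
-/

/-- The odd elements of `H`, encoded like the even ones in `d2 H`: `k` stands for `2 * k + 1`. It is
a relative ideal of `d2 H`, by `add_mem_oddPart`. -/
def oddPart (H : AddSubmonoid ℕ) : Set ℕ :=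
  {k | 2 * k + 1 ∈ H}

section Parity

variable {H K : AddSubmonoid ℕ} {k m : ℕ}

lemma mem_d2 : k ∈ d2 H ↔ 2 * k ∈ H :=
  Iff.rfl

lemma mem_oddPart : k ∈ oddPart H ↔ 2 * k + 1 ∈ H :=
  Iff.rfl

lemma add_mem_oddPart (hm : m ∈ oddPart H) (hk : k ∈ d2 H) : m + k ∈ oddPart H := by
  rw [mem_oddPart, show 2 * (m + k) + 1 = 2 * m + 1 + 2 * k by ring]
  exact H.add_mem hm hk

lemma add_add_one_mem_d2 (hm : m ∈ oddPart H) (hk : k ∈ oddPart H) : m + k + 1 ∈ d2 H := by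
  rw [mem_d2, show 2 * (m + k + 1) = 2 * m + 1 + (2 * k + 1) by ring]
  exact H.add_mem hm hk

lemma le_of_d2_le_of_oddPart_subset (heven : d2 H ≤ d2 K) (hodd : oddPart H ⊆ oddPart K) :
    H ≤ K := by
  intro x hx
  rcases Nat.even_or_odd' x with ⟨k, rfl | rfl⟩
  · exact heven hx
  · exact hodd hx

lemma eq_closure_of_d2_eq_closure {S T : Set ℕ} (hS : d2 H = AddSubmonoid.closure S)
    (hT : T ⊆ oddPart H) (hcover : ∀ k ∈ oddPart H, ∃ t ∈ T, ∃ d ∈ d2 H, t + d = k) :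
    H = AddSubmonoid.closure ((fun k => 2 * k) '' S ∪ (fun k => 2 * k + 1) '' T) := by
  set K := AddSubmonoid.closure ((fun k => 2 * k) '' S ∪ (fun k => 2 * k + 1) '' T)
  have hSK : d2 H ≤ d2 K := by
    rw [hS, AddSubmonoid.closure_le]
    exact fun s hs => AddSubmonoid.subset_closure (.inl ⟨s, hs, rfl⟩)
  have hTK : T ⊆ oddPart K := fun t ht => AddSubmonoid.subset_closure (.inr ⟨t, ht, rfl⟩)
  apply le_antisymm
  · refine le_of_d2_le_of_oddPart_subset hSK fun k hk => ?_
    obtain ⟨t, ht, d, hd, rfl⟩ := hcover k hk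
    exact add_mem_oddPart (hTK ht) (hSK hd)
  · rw [AddSubmonoid.closure_le]
    rintro _ (⟨s, hs, rfl⟩ | ⟨t, ht, rfl⟩)
    · exact mem_d2.1 (hS ▸ AddSubmonoid.subset_closure hs)
    · exact hT ht

lemma ncard_eq_ncard_preimage_two_mul_add {s : Set ℕ} (hs : s.Finite) :
    s.ncard = ((fun k => 2 * k) ⁻¹' s).ncard + ((fun k => 2 * k + 1) ⁻¹' s).ncard := by
  have heven : (fun k : ℕ => 2 * k).Injective := fun a b h => by simpa using h
  have hodd : (fun k : ℕ => 2 * k + 1).Injective := fun a b h => by simpa using h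
  rw [← Set.ncard_image_of_injective ((fun k => 2 * k) ⁻¹' s) heven,
    ← Set.ncard_image_of_injective ((fun k => 2 * k + 1) ⁻¹' s) hodd,
    Set.image_preimage_eq_inter_range, Set.image_preimage_eq_inter_range, range_two_mul,
    range_two_mul_add_one, ← Nat.isCompl_even_odd.compl_eq, ← Set.sdiff_eq,
    Set.ncard_inter_add_ncard_sdiff_eq_ncard s _ hs]

lemma genus_eq_genus_d2_add (hH : (H : Set ℕ)ᶜ.Finite) :
    genus H = genus (d2 H) + (oddPart H)ᶜ.ncard :=
  ncard_eq_ncard_preimage_two_mul_add hH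

lemma oddPart_nonempty (hH : (H : Set ℕ)ᶜ.Finite) : (oddPart H).Nonempty := by
  by_contra! hempty
  exact Set.infinite_of_injective_forall_mem (f := fun k : ℕ => 2 * k + 1)
    (fun a b h => by simpa using h) (Set.eq_empty_iff_forall_notMem.1 hempty) hH

end Parity

lemma mem_closure_two_three_iff {k : ℕ} : k ∈ AddSubmonoid.closure ({2, 3} : Set ℕ) ↔ k ≠ 1 := by
  constructor
  · intro h
    induction h using AddSubmonoid.closure_induction with
    | mem x hx => rcases hx with rfl | rfl <;> norm_num
    | zero => norm_num
    | add x y _ _ hx hy => omega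
  · intro hk
    obtain ⟨a, b, rfl⟩ : ∃ a b, a * 2 + b * 3 = k := ⟨(k - 3 * (k % 2)) / 2, k % 2, by omega⟩
    exact (AddSubmonoid.mem_closure_pair _ _ _).2 ⟨a, b, rfl⟩

lemma genus_closure_two_three : genus (AddSubmonoid.closure {2, 3}) = 1 := by
  rw [genus, Set.ncard_eq_one]
  exact ⟨1, by ext k; simp [mem_closure_two_three_iff]⟩

lemma closure_insert_nsmul {M : Type*} [AddMonoid M] {s : Set M} {x : M} (hx : x ∈ s) (n : ℕ) :
    AddSubmonoid.closure (insert (n • x) s) = AddSubmonoid.closure s := by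
  rw [Set.insert_eq, AddSubmonoid.closure_union, sup_eq_right,
    AddSubmonoid.closure_singleton_le_iff_mem]
  exact AddSubmonoid.nsmul_mem _ (AddSubmonoid.subset_closure hx) n

lemma closure_four_six_three_insert (s : Set ℕ) :
    AddSubmonoid.closure (insert 4 (insert 6 (insert 3 s))) =
      AddSubmonoid.closure (insert 3 (insert 4 s)) := by
  rw [Set.insert_comm 4 6, Set.insert_comm 4 3]
  exact closure_insert_nsmul (Set.mem_insert 3 _) 2

section D2EqClosureTwoThree

variable {H : AddSubmonoid ℕ} {k m : ℕ}

lemma mem_d2_iff_ne_one (hd : d2 H = AddSubmonoid.closure {2, 3}) : k ∈ d2 H ↔ k ≠ 1 := by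
  rw [hd, mem_closure_two_three_iff]

lemma zero_notMem_oddPart (hd : d2 H = AddSubmonoid.closure {2, 3}) : 0 ∉ oddPart H :=
  fun h => (mem_d2_iff_ne_one hd).1 (add_add_one_mem_d2 h h) rfl

lemma mem_oddPart_iff_of_isLeast (hd : d2 H = AddSubmonoid.closure {2, 3})
    (hm : IsLeast (oddPart H) m) (hk : k ≠ m + 1) : k ∈ oddPart H ↔ m ≤ k := by
  refine ⟨fun h => hm.2 h, fun h => ?_⟩
  obtain ⟨d, rfl⟩ := Nat.exists_eq_add_of_le h
  exact add_mem_oddPart hm.1 ((mem_d2_iff_ne_one hd).2 (by omega))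

lemma genus_of_succ_mem_oddPart (hH : (H : Set ℕ)ᶜ.Finite)
    (hd : d2 H = AddSubmonoid.closure {2, 3}) (hm : IsLeast (oddPart H) m)
    (hsucc : m + 1 ∈ oddPart H) : genus H = m + 1 := by
  have hgaps : (oddPart H)ᶜ = Set.Iio m := by
    ext k
    by_cases hk : k = m + 1
    · simp [hk, hsucc]
    · simp [mem_oddPart_iff_of_isLeast hd hm hk]
  rw [genus_eq_genus_d2_add hH, hd, genus_closure_two_three, hgaps, Set.ncard_Iio_nat, add_comm]

lemma genus_of_succ_notMem_oddPart (hH : (H : Set ℕ)ᶜ.Finite)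
    (hd : d2 H = AddSubmonoid.closure {2, 3}) (hm : IsLeast (oddPart H) m)
    (hsucc : m + 1 ∉ oddPart H) : genus H = m + 2 := by
  have hgaps : (oddPart H)ᶜ = insert (m + 1) (Set.Iio m) := by
    ext k
    by_cases hk : k = m + 1
    · simp [hk, hsucc]
    · simp [mem_oddPart_iff_of_isLeast hd hm hk, hk]
  rw [genus_eq_genus_d2_add hH, hd, genus_closure_two_three, hgaps,
    Set.ncard_insert_of_notMem (by simp), Set.ncard_Iio_nat, add_comm]

lemma exists_add_eq_of_mem_oddPart (hd : d2 H = AddSubmonoid.closure {2, 3})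
    (hm : IsLeast (oddPart H) m) (hk : k ∈ oddPart H) (hne : k ≠ m + 1) :
    ∃ d ∈ d2 H, m + d = k := by
  obtain ⟨d, rfl⟩ := Nat.exists_eq_add_of_le (hm.2 hk)
  exact ⟨d, (mem_d2_iff_ne_one hd).2 (by omega), rfl⟩

lemma eq_closure_of_succ_mem_oddPart (hd : d2 H = AddSubmonoid.closure {2, 3})
    (hm : IsLeast (oddPart H) m) (hsucc : m + 1 ∈ oddPart H) :
    H = AddSubmonoid.closure {4, 6, 2 * m + 1, 2 * m + 3} := by
  have hT : {m, m + 1} ⊆ oddPart H := Set.pair_subset hm.1 hsucc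
  have h := eq_closure_of_d2_eq_closure hd hT fun k hk => by
    by_cases hne : k = m + 1
    · exact ⟨m + 1, by simp, 0, zero_mem _, hne.symm⟩
    · exact ⟨m, by simp, exists_add_eq_of_mem_oddPart hd hm hk hne⟩
  rwa [Set.image_pair, Set.image_pair, Set.insert_union, Set.singleton_union] at h

lemma eq_closure_of_succ_notMem_oddPart (hd : d2 H = AddSubmonoid.closure {2, 3})
    (hm : IsLeast (oddPart H) m) (hsucc : m + 1 ∉ oddPart H) :
    H = AddSubmonoid.closure {4, 6, 2 * m + 1} := by
  have hT : {m} ⊆ oddPart H := Set.singleton_subset_iff.2 hm.1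
  have h := eq_closure_of_d2_eq_closure hd hT fun k hk =>
    ⟨m, rfl, exists_add_eq_of_mem_oddPart hd hm hk (ne_of_mem_of_not_mem hk hsucc)⟩
  rwa [Set.image_pair, Set.image_singleton, Set.insert_union, Set.singleton_union] at h

end D2EqClosureTwoThree

/-- Let `H̃` be a numerical semigroup of genus `g̃` with `d₂(H̃) = ⟨2,3⟩`. Then `H̃` is
`⟨3,4,5⟩`, or `⟨3,4⟩`, or `⟨4,5,6,7⟩`, or `⟨4,6,2g̃-3⟩` with `g̃ ≥ 4`, or
`⟨4,6,2g̃-1,2g̃+1⟩` with `g̃ ≥ 4`. -/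
theorem classification_d2_eq_closure_two_three (H : AddSubmonoid ℕ)
    (hH : ((H : Set ℕ)ᶜ).Finite)
    (hd : d2 H = AddSubmonoid.closure {2, 3}) :
    H = AddSubmonoid.closure {3, 4, 5} ∨
      H = AddSubmonoid.closure {3, 4} ∨
      H = AddSubmonoid.closure {4, 5, 6, 7} ∨
      (4 ≤ genus H ∧ H = AddSubmonoid.closure {4, 6, 2 * genus H - 3}) ∨
      (4 ≤ genus H ∧
        H = AddSubmonoid.closure {4, 6, 2 * genus H - 1, 2 * genus H + 1}) := by
  have hm : IsLeast (oddPart H) (sInf (oddPart H)) := isLeast_csInf (oddPart_nonempty hH)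
  generalize sInf (oddPart H) = m at hm
  have hm0 : m ≠ 0 := ne_of_mem_of_not_mem hm.1 (zero_notMem_oddPart hd)
  by_cases hsucc : m + 1 ∈ oddPart H
  · have hcl := eq_closure_of_succ_mem_oddPart hd hm hsucc
    have hg : genus H = m + 1 := genus_of_succ_mem_oddPart hH hd hm hsucc
    obtain rfl | rfl | hm3 : m = 1 ∨ m = 2 ∨ 3 ≤ m := by omega
    · left
      exact hcl.trans (closure_four_six_three_insert {5})
    · right; right; left
      rw [hcl, Set.insert_comm 6]
    · right; right; right; right
      exact ⟨by omega, by rwa [show 2 * genus H - 1 = 2 * m + 1 by omega,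
        show 2 * genus H + 1 = 2 * m + 3 by omega]⟩
  · have hcl := eq_closure_of_succ_notMem_oddPart hd hm hsucc
    have hg : genus H = m + 2 := genus_of_succ_notMem_oddPart hH hd hm hsucc
    obtain rfl | hm2 : m = 1 ∨ 2 ≤ m := by omega
    · right; left
      exact hcl.trans (by simpa using closure_four_six_three_insert ∅)
    · right; right; right; left
      exact ⟨by omega, by rwa [show 2 * genus H - 3 = 2 * m + 1 by omega]⟩
end
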